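/- Optimal single-letter communication rate region for the example with shared randomness between all three pairs. The set of pairs (R₁,R₂) of nonnegative reals for which there exist finite sets 𝒯,𝒰₀,𝒰₁,𝒰₂ and a pmf p(x₁,x₂,t,u₀,u₁,u₂,y) = p(x₁) p(x₂) p(t) p(u₀|t) p(u₁|x₁,u₀,t) p(u₂|x₂,u₀,t) p(y|u₁,u₂,t), whose (X₁,X₂)-marginal is that of four i.i.d. uniform bits and which satisfies ∑_{u₀,u₁,u₂} p(x₁,x₂,u₀,u₁,u₂,y|t) = q(x₁,x₂,y) for every t, with R₁ ≥ I(U₀,U₁;X₁|T), R₂ ≥ I(U₀,U₂;X₂|T), and R₁+R₂ ≥ I(U₀,U₁,U₂;X₁,X₂|T), is exactly the set { (R₁,R₂) : R₁ ≥ 1, R₂ ≥ 1 }. -/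

import Mathlib

open Finset

/-- A probability mass function on a finite type. -/
def IsPMF {α : Type*} [Fintype α] (p : α → ℝ) : Prop :=
  (∀ a, 0 ≤ p a) ∧ ∑ a, p a = 1

/-- Marginal (pushforward) of a pmf `p` on `Ω` under the map `f`. -/
noncomputable def marg {Ω β : Type*} [Fintype Ω] [DecidableEq β]
    (p : Ω → ℝ) (f : Ω → β) (b : β) : ℝ :=
  ∑ ω : Ω, if f ω = b then p ω else 0

/-- Shannon entropy (in bits) of a pmf given as a function. -/
noncomputable def entPMF {β : Type*} [Fintype β] (r : β → ℝ) : ℝ :=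
  -∑ b : β, r b * Real.logb 2 (r b)

/-- Entropy (in bits) of the random variable `f` under the joint pmf `p`. -/
noncomputable def ent {Ω β : Type*} [Fintype Ω] [Fintype β] [DecidableEq β]
    (p : Ω → ℝ) (f : Ω → β) : ℝ :=
  entPMF (fun b => marg p f b)

/-- Conditional entropy `H(f | g)`. -/
noncomputable def condEnt {Ω β γ : Type*} [Fintype Ω] [Fintype β] [Fintype γ]
    [DecidableEq β] [DecidableEq γ] (p : Ω → ℝ) (f : Ω → β) (g : Ω → γ) : ℝ :=
  ent p (fun ω => (f ω, g ω)) - ent p g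

/-- Mutual information `I(f ; g)`. -/
noncomputable def mi {Ω β γ : Type*} [Fintype Ω] [Fintype β] [Fintype γ]
    [DecidableEq β] [DecidableEq γ] (p : Ω → ℝ) (f : Ω → β) (g : Ω → γ) : ℝ :=
  ent p f + ent p g - ent p (fun ω => (f ω, g ω))

/-- Conditional mutual information `I(f ; g | h)`. -/
noncomputable def cmi {Ω β γ δ : Type*} [Fintype Ω] [Fintype β] [Fintype γ] [Fintype δ]
    [DecidableEq β] [DecidableEq γ] [DecidableEq δ]
    (p : Ω → ℝ) (f : Ω → β) (g : Ω → γ) (h : Ω → δ) : ℝ :=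
  ent p (fun ω => (f ω, h ω)) + ent p (fun ω => (g ω, h ω))
    - ent p (fun ω => (f ω, g ω, h ω)) - ent p h

/-- `bsel x j` is the `j`-th bit of the two-bit string `x`. -/
def bsel (x : Bool × Bool) (j : Fin 2) : Bool := if j = 0 then x.1 else x.2

/-- The Example distribution: `X₁ = (X₁₁, X₁₂)` and `X₂ = (X₂₁, X₂₂)` are four i.i.d.
uniform bits, `J` is uniform on `{1,2}` independent of `(X₁, X₂)`, and
`Y = (X₁J, X₂J)`; `qEx` is the induced joint pmf of `(X₁, X₂, Y)`. -/
noncomputable def qEx : (Bool × Bool) × (Bool × Bool) × (Bool × Bool) → ℝ :=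
  fun a => ∑ j : Fin 2,
    (1 / 32 : ℝ) * (if a.2.2 = (bsel a.1 j, bsel a.2.1 j) then 1 else 0)

/-!
If two inputs `x`, `x'` of the first encoder reach the same values `(t, u₀, u₁)` with positive
probability, then for every input `x₂` of the second encoder some output has positive probability
under both `(x, x₂)` and `(x', x₂)`. Hence the conditional law of `X₁` given `(U₀, U₁, T)` is
supported on a set of pairwise confusable inputs, and if such a set has at most `k` elements then
`I(U₀, U₁; X₁ | T) = H(X₁) - H(X₁ | U₀, U₁, T) ≥ H(X₁) - log k`. In the example an input and its
bitwise complement are never confusable, so `k = 2` and the bound is `2 - 1`; exchanging the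
encoders gives the bound on `R₂`. Conversely, taking `T` trivial, `U₀ = J`, `Uᵢ = XᵢJ` and
`Y = (U₁, U₂)` makes the three informations equal to `1`, `1` and `2`.
-/

section Marginals

variable {Ω β γ : Type*} [Fintype Ω] [DecidableEq β] [DecidableEq γ]

lemma exists_of_marg_ne_zero {p : Ω → ℝ} {f : Ω → β} {b : β} (h : marg p f b ≠ 0) :
    ∃ ω, f ω = b ∧ p ω ≠ 0 := by
  obtain ⟨ω, -, hω⟩ := exists_ne_zero_of_sum_ne_zero h
  exact ⟨ω, ite_ne_right_iff.1 hω⟩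

lemma marg_nonneg {p : Ω → ℝ} (hp : ∀ ω, 0 ≤ p ω) (f : Ω → β) (b : β) : 0 ≤ marg p f b :=
  sum_nonneg fun ω _ => ite_nonneg (hp ω) le_rfl

lemma sum_marg_mul [Fintype β] (p : Ω → ℝ) (f : Ω → β) (φ : β → ℝ) :
    ∑ b, marg p f b * φ b = ∑ ω, p ω * φ (f ω) := by
  simp only [marg, sum_mul, ite_mul, zero_mul]
  rw [sum_comm]
  simp

lemma sum_marg [Fintype β] (p : Ω → ℝ) (f : Ω → β) : ∑ b, marg p f b = ∑ ω, p ω := by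
  simpa using sum_marg_mul p f 1

lemma marg_marg [Fintype β] (p : Ω → ℝ) (f : Ω → β) (g : β → γ) :
    marg (marg p f) g = marg p (g ∘ f) := by
  ext c
  simpa [marg] using sum_marg_mul p f fun b => if g b = c then 1 else 0

lemma marg_comp_equiv {Ω' : Type*} [Fintype Ω'] (p : Ω → ℝ) (e : Ω' ≃ Ω) (f : Ω → β) :
    marg (p ∘ e) (f ∘ e) = marg p f := by
  ext b
  exact e.sum_comp fun ω => if f ω = b then p ω else 0

lemma marg_equiv_comp (p : Ω → ℝ) (f : Ω → β) (e : β ≃ γ) (b : β) :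
    marg p (e ∘ f) (e b) = marg p f b := by
  simp [marg]

lemma sum_marg_pair [Fintype γ] (p : Ω → ℝ) (g : Ω → γ) (f : Ω → β) (b : β) :
    ∑ c, marg p (fun ω => (g ω, f ω)) (c, b) = marg p f b := by
  simp only [marg, Prod.mk.injEq, ite_and]
  rw [sum_comm]
  simp

end Marginals

section Entropy

/- The inequality `log z ≤ z - 1` is applied to `z = R / (k * r c)`. -/
lemma sum_mul_logb_sub_le_mul_logb_card {γ : Type*} [Fintype γ] {r : γ → ℝ}
    (hr : ∀ c, 0 ≤ r c) {k : ℕ} (hk : #{c | r c ≠ 0} ≤ k) :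
    (∑ c, r c) * Real.logb 2 (∑ c, r c) - ∑ c, r c * Real.logb 2 (r c)
      ≤ (∑ c, r c) * Real.logb 2 k := by
  set R := ∑ c, r c with hR
  have pointwise (c : γ) : r c * Real.log R - r c * Real.log (r c) - r c * Real.log k
      ≤ (if r c ≠ 0 then R / k else 0) - r c := by
    rcases (hr c).eq_or_lt with hc | hc
    · simp [← hc]
    have hRpos : 0 < R := hc.trans_le (single_le_sum (fun c _ => hr c) (mem_univ c))
    have hkpos : (0 : ℝ) < k :=
      Nat.cast_pos.2 ((card_pos.2 ⟨c, by simp [hc.ne']⟩).trans_le hk)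
    have hlog := mul_le_mul_of_nonneg_left
      (Real.log_le_sub_one_of_pos (div_pos hRpos (mul_pos hkpos hc))) hc.le
    rw [Real.log_div hRpos.ne' (mul_pos hkpos hc).ne', Real.log_mul hkpos.ne' hc.ne'] at hlog
    rw [if_pos hc.ne']
    calc _ = r c * (Real.log R - (Real.log k + Real.log (r c))) := by ring
      _ ≤ r c * (R / (k * r c) - 1) := hlog
      _ = R / k - r c := by field_simp
  have atoms : #{c | r c ≠ 0} * (R / k) ≤ R := by
    have hRnonneg : 0 ≤ R := sum_nonneg fun c _ => hr c
    calc #{c | r c ≠ 0} * (R / k) ≤ k * (R / k) := by gcongr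
      _ = k / k * R := by ring
      _ ≤ R := mul_le_of_le_one_left hRnonneg (div_self_le_one _)
  have summed := sum_le_sum fun c (_ : c ∈ univ) => pointwise c
  simp only [sum_sub_distrib, ← sum_mul, ← hR, ← sum_filter, sum_const, nsmul_eq_mul] at summed
  simp only [Real.logb, mul_div_assoc', ← sum_div, ← sub_div]
  gcongr
  linarith

variable {Ω β γ δ : Type*} [Fintype Ω] [Fintype β] [Fintype γ] [Fintype δ]
  [DecidableEq β] [DecidableEq γ] [DecidableEq δ]

lemma ent_eq_neg_sum (p : Ω → ℝ) (f : Ω → β) :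
    ent p f = -∑ ω, p ω * Real.logb 2 (marg p f (f ω)) := by
  rw [ent, entPMF, sum_marg_mul p f fun b => Real.logb 2 (marg p f b)]

lemma ent_marg (p : Ω → ℝ) (f : Ω → β) (g : β → γ) : ent (marg p f) g = ent p (g ∘ f) := by
  simp only [ent, marg_marg]

lemma ent_equiv_comp (p : Ω → ℝ) (f : Ω → β) (e : β ≃ γ) : ent p (e ∘ f) = ent p f := by
  simp only [ent, entPMF, ← e.sum_comp, marg_equiv_comp]

lemma cmi_comp_equiv {Ω' : Type*} [Fintype Ω'] (p : Ω → ℝ) (e : Ω' ≃ Ω) (f : Ω → β)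
    (g : Ω → γ) (h : Ω → δ) : cmi (p ∘ e) (f ∘ e) (g ∘ e) (h ∘ e) = cmi p f g h := by
  simp only [cmi, ent, ← marg_comp_equiv p e, Function.comp_def]

lemma cmi_eq_condEnt_sub_condEnt (p : Ω → ℝ) (f : Ω → β) (g : Ω → γ) (h : Ω → δ) :
    cmi p f g h = condEnt p g h - condEnt p g (fun ω => (f ω, h ω)) := by
  have swap : ent p (fun ω => (g ω, f ω, h ω)) = ent p (fun ω => (f ω, g ω, h ω)) :=
    ent_equiv_comp p (fun ω => (f ω, g ω, h ω))
      ⟨fun a => (a.2.1, a.1, a.2.2), fun a => (a.2.1, a.1, a.2.2), fun _ => rfl, fun _ => rfl⟩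
  rw [cmi, condEnt, condEnt, swap]
  ring

lemma ent_uniform_of_card_fiber [Nonempty Ω] (f : Ω → β) {m : ℕ}
    (hf : ∀ ω, #{ω' | f ω' = f ω} = m) :
    ent (fun _ => (Fintype.card Ω : ℝ)⁻¹) f = Real.logb 2 (Fintype.card Ω / m) := by
  have marg_eq (ω : Ω) :
      marg (fun _ => (Fintype.card Ω : ℝ)⁻¹) f (f ω) = (Fintype.card Ω / m : ℝ)⁻¹ := by
    rw [marg, ← sum_filter, sum_const, hf, nsmul_eq_mul, inv_div, div_eq_mul_inv]
  simp only [ent_eq_neg_sum, marg_eq, Real.logb_inv]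
  simp

lemma condEnt_eq_entPMF_of_marg_eq_mul {p : Ω → ℝ} {g : Ω → γ} {h : Ω → δ} {r : γ → ℝ}
    {w : δ → ℝ} (hr : ∑ c, r c = 1) (hw : ∑ d, w d = 1)
    (hgh : ∀ c d, marg p (fun ω => (g ω, h ω)) (c, d) = r c * w d) :
    condEnt p g h = entPMF r := by
  have marg_h (d : δ) : marg p h d = w d := by
    rw [← sum_marg_pair p g h d]
    simp only [hgh, ← sum_mul, hr, one_mul]
  have log_mul (c : γ) (d : δ) : r c * w d * Real.logb 2 (r c * w d) =
      r c * Real.logb 2 (r c) * w d + r c * (w d * Real.logb 2 (w d)) := by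
    rcases eq_or_ne (r c) 0 with hc | hc
    · simp [hc]
    rcases eq_or_ne (w d) 0 with hd | hd
    · simp [hd]
    rw [Real.logb_mul hc hd]
    ring
  simp only [condEnt, ent, entPMF, Fintype.sum_prod_type, hgh, marg_h, log_mul,
    sum_add_distrib, ← mul_sum, ← sum_mul, hr, hw]
  ring

lemma condEnt_le_logb_of_card_support_le {p : Ω → ℝ} (hp : IsPMF p) {g : Ω → γ} {h : Ω → δ}
    {k : ℕ} (hk : ∀ d, #{c | marg p (fun ω => (g ω, h ω)) (c, d) ≠ 0} ≤ k) :
    condEnt p g h ≤ Real.logb 2 k := by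
  have fiber (d : δ) :=
    sum_mul_logb_sub_le_mul_logb_card (fun c => marg_nonneg hp.1 _ (c, d)) (hk d)
  simp only [sum_marg_pair] at fiber
  calc condEnt p g h
      = ∑ d, (marg p h d * Real.logb 2 (marg p h d) - ∑ c, marg p (fun ω => (g ω, h ω)) (c, d) *
          Real.logb 2 (marg p (fun ω => (g ω, h ω)) (c, d))) := by
        rw [condEnt, ent, ent, entPMF, entPMF, Fintype.sum_prod_type_right, sum_sub_distrib]
        ring
    _ ≤ ∑ d, marg p h d * Real.logb 2 k := sum_le_sum fun d _ => fiber d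
    _ = Real.logb 2 k := by rw [← sum_mul, sum_marg, hp.2, one_mul]

end Entropy

lemma IsPMF.exists_ne_zero {α : Type*} [Fintype α] {p : α → ℝ} (hp : IsPMF p) :
    ∃ a, p a ≠ 0 := by
  obtain ⟨a, -, ha⟩ := exists_ne_zero_of_sum_ne_zero (hp.2 ▸ one_ne_zero)
  exact ⟨a, ha⟩

lemma isPMF_ite_eq {α : Type*} [Fintype α] [DecidableEq α] (a : α) :
    IsPMF fun x => if x = a then (1 : ℝ) else 0 :=
  ⟨fun _ => ite_nonneg zero_le_one le_rfl, by simp⟩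

/-- A one-shot coding scheme for two encoders and a decoder in which every pair shares
randomness: `T` is common to all three parties, `U₀` is common to the two encoders, and `U₁`, `U₂`
carry what the respective encoder has in common with the decoder. -/
structure SharedRandomnessScheme (X₁ X₂ Y T U₀ U₁ U₂ : Type*) [Fintype Y] [Fintype T]
    [Fintype U₀] [Fintype U₁] [Fintype U₂] where
  pT : T → ℝ
  pU₀ : T → U₀ → ℝ
  pU₁ : X₁ → U₀ → T → U₁ → ℝ
  pU₂ : X₂ → U₀ → T → U₂ → ℝ
  pY : U₁ → U₂ → T → Y → ℝ
  isPMF_pT : IsPMF pT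
  isPMF_pU₀ : ∀ t, IsPMF (pU₀ t)
  isPMF_pU₁ : ∀ x₁ u₀ t, IsPMF (pU₁ x₁ u₀ t)
  isPMF_pU₂ : ∀ x₂ u₀ t, IsPMF (pU₂ x₂ u₀ t)
  isPMF_pY : ∀ u₁ u₂ t, IsPMF (pY u₁ u₂ t)

/-- Two inputs `x`, `x'` of the first encoder are confusable under the target `q` if, whatever the
input of the second encoder, some output is possible for both of them. -/
def Confusable {X₁ X₂ Y : Type*} (q : X₁ × X₂ × Y → ℝ) (x x' : X₁) : Prop :=
  ∀ x₂, ∃ y, q (x, x₂, y) ≠ 0 ∧ q (x', x₂, y) ≠ 0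

namespace SharedRandomnessScheme

variable {X₁ X₂ Y T U₀ U₁ U₂ : Type*} [Fintype Y] [Fintype T] [Fintype U₀] [Fintype U₁]
  [Fintype U₂] (s : SharedRandomnessScheme X₁ X₂ Y T U₀ U₁ U₂) (μ : X₁ × X₂ → ℝ)

/-- The joint pmf of `(X₁, X₂, T, U₀, U₁, U₂, Y)` when the inputs have law `μ`. -/
def joint (ω : X₁ × X₂ × T × U₀ × U₁ × U₂ × Y) : ℝ :=
  match ω with
  | (x₁, x₂, t, u₀, u₁, u₂, y) =>
    μ (x₁, x₂) * s.pT t * s.pU₀ t u₀ * s.pU₁ x₁ u₀ t u₁ * s.pU₂ x₂ u₀ t u₂ * s.pY u₁ u₂ t y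

/-- The scheme simulates the target `q` from inputs of law `μ` if `(X₁, X₂, Y)` has pmf `q`
conditionally on every value of `T`. -/
def Simulates (q : X₁ × X₂ × Y → ℝ) : Prop :=
  ∀ t x₁ x₂ y, (∑ u₀, ∑ u₁, ∑ u₂,
    μ (x₁, x₂) * s.pU₀ t u₀ * s.pU₁ x₁ u₀ t u₁ * s.pU₂ x₂ u₀ t u₂ * s.pY u₁ u₂ t y)
      = q (x₁, x₂, y)

/-- The scheme in which the two encoders exchange their roles. -/
def swap : SharedRandomnessScheme X₂ X₁ Y T U₀ U₂ U₁ where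
  pT := s.pT
  pU₀ := s.pU₀
  pU₁ := s.pU₂
  pU₂ := s.pU₁
  pY u₂ u₁ := s.pY u₁ u₂
  isPMF_pT := s.isPMF_pT
  isPMF_pU₀ := s.isPMF_pU₀
  isPMF_pU₁ := s.isPMF_pU₂
  isPMF_pU₂ := s.isPMF_pU₁
  isPMF_pY u₂ u₁ := s.isPMF_pY u₁ u₂

/-- The relabelling of the variables under which the joint pmf of `s` becomes that of `s.swap`. -/
def exchange : X₁ × X₂ × T × U₀ × U₁ × U₂ × Y ≃ X₂ × X₁ × T × U₀ × U₂ × U₁ × Y where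
  toFun := fun (x₁, x₂, t, u₀, u₁, u₂, y) => (x₂, x₁, t, u₀, u₂, u₁, y)
  invFun := fun (x₂, x₁, t, u₀, u₂, u₁, y) => (x₁, x₂, t, u₀, u₁, u₂, y)
  left_inv _ := rfl
  right_inv _ := rfl

variable {s μ}

lemma Simulates.swap {q : X₁ × X₂ × Y → ℝ} (hs : s.Simulates μ q) :
    s.swap.Simulates (μ ∘ Prod.swap) fun a => q (a.2.1, a.1, a.2.2) := by
  intro t x₂ x₁ y
  refine .trans ?_ (hs t x₁ x₂ y)
  refine sum_congr rfl fun u₀ _ => ?_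
  rw [sum_comm]
  refine sum_congr rfl fun u₁ _ => sum_congr rfl fun u₂ _ => ?_
  simp only [SharedRandomnessScheme.swap, Function.comp_apply, Prod.swap_prod_mk]
  ring

lemma Simulates.ne_zero {q : X₁ × X₂ × Y → ℝ} (hs : s.Simulates μ q) (hμ : ∀ a, 0 < μ a)
    {x₁ : X₁} {x₂ : X₂} {y : Y} {t : T} {u₀ : U₀} {u₁ : U₁} {u₂ : U₂} (h₀ : s.pU₀ t u₀ ≠ 0)
    (h₁ : s.pU₁ x₁ u₀ t u₁ ≠ 0) (h₂ : s.pU₂ x₂ u₀ t u₂ ≠ 0) (hy : s.pY u₁ u₂ t y ≠ 0) :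
    q (x₁, x₂, y) ≠ 0 := by
  let term (v : U₀ × U₁ × U₂) : ℝ := μ (x₁, x₂) * s.pU₀ t v.1 * s.pU₁ x₁ v.1 t v.2.1 *
    s.pU₂ x₂ v.1 t v.2.2 * s.pY v.2.1 v.2.2 t y
  have term_nonneg (v : U₀ × U₁ × U₂) : 0 ≤ term v :=
    mul_nonneg (mul_nonneg (mul_nonneg (mul_nonneg (hμ _).le ((s.isPMF_pU₀ _).1 _))
      ((s.isPMF_pU₁ _ _ _).1 _)) ((s.isPMF_pU₂ _ _ _).1 _)) ((s.isPMF_pY _ _ _).1 _)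
  have sum_term : ∑ v, term v = q (x₁, x₂, y) := by
    simp only [← hs t x₁ x₂ y, Fintype.sum_prod_type, term]
  have term_ne_zero : term (u₀, u₁, u₂) ≠ 0 := by simp [term, (hμ _).ne', h₀, h₁, h₂, hy]
  rw [← sum_term, ne_eq, sum_eq_zero_iff_of_nonneg fun v _ => term_nonneg v]
  exact fun h => term_ne_zero (h _ (mem_univ _))

lemma Simulates.confusable {q : X₁ × X₂ × Y → ℝ} (hs : s.Simulates μ q) (hμ : ∀ a, 0 < μ a)
    {x x' : X₁} {t : T} {u₀ : U₀} {u₁ : U₁} (h₀ : s.pU₀ t u₀ ≠ 0) (hx : s.pU₁ x u₀ t u₁ ≠ 0)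
    (hx' : s.pU₁ x' u₀ t u₁ ≠ 0) : Confusable q x x' := by
  intro x₂
  obtain ⟨u₂, h₂⟩ := (s.isPMF_pU₂ x₂ u₀ t).exists_ne_zero
  obtain ⟨y, hy⟩ := (s.isPMF_pY u₁ u₂ t).exists_ne_zero
  exact ⟨y, hs.ne_zero hμ h₀ hx h₂ hy, hs.ne_zero hμ h₀ hx' h₂ hy⟩

variable (s μ)

lemma sum_joint (x₁ : X₁) (x₂ : X₂) (t : T) :
    ∑ u₀, ∑ u₁, ∑ u₂, ∑ y, s.joint μ (x₁, x₂, t, u₀, u₁, u₂, y) = μ (x₁, x₂) * s.pT t := by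
  simp only [joint, ← mul_sum, (s.isPMF_pY _ _ _).2, (s.isPMF_pU₂ _ _ _).2,
    (s.isPMF_pU₁ _ _ _).2, (s.isPMF_pU₀ _).2, mul_one]

lemma swap_joint_comp_exchange : s.swap.joint (μ ∘ Prod.swap) ∘ exchange = s.joint μ := by
  ext ⟨x₁, x₂, t, u₀, u₁, u₂, y⟩
  simp only [joint, swap, exchange, Function.comp_apply, Equiv.coe_fn_mk, Prod.swap_prod_mk]
  ring

variable [Fintype X₁] [Fintype X₂]

lemma isPMF_joint {μ : X₁ × X₂ → ℝ} (hμ : IsPMF μ) : IsPMF (s.joint μ) := by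
  constructor
  · rintro ⟨x₁, x₂, t, u₀, u₁, u₂, y⟩
    exact mul_nonneg (mul_nonneg (mul_nonneg (mul_nonneg (mul_nonneg (hμ.1 _) (s.isPMF_pT.1 _))
      ((s.isPMF_pU₀ _).1 _)) ((s.isPMF_pU₁ _ _ _).1 _)) ((s.isPMF_pU₂ _ _ _).1 _))
      ((s.isPMF_pY _ _ _).1 _)
  · simp only [Fintype.sum_prod_type, sum_joint, ← mul_sum, s.isPMF_pT.2, mul_one]
    rw [← Fintype.sum_prod_type, hμ.2]

lemma marg_joint_fst [DecidableEq X₁] [DecidableEq T] (x₁ : X₁) (t : T) :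
    marg (s.joint μ) (fun ω => (ω.1, ω.2.2.1)) (x₁, t) = (∑ x₂, μ (x₁, x₂)) * s.pT t := by
  simp only [marg, Fintype.sum_prod_type]
  simp [ite_and, sum_mul, sum_joint]

variable {s μ}

theorem Simulates.entPMF_sub_logb_le_cmi_left [DecidableEq X₁] [DecidableEq T] [DecidableEq U₀]
    [DecidableEq U₁] {q : X₁ × X₂ × Y → ℝ} (hs : s.Simulates μ q)
    (hμ : IsPMF μ) (hμ_pos : ∀ a, 0 < μ a) {k : ℕ}
    (hk : ∀ S : Finset X₁, (S : Set X₁).Pairwise (Confusable q) → #S ≤ k) :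
    entPMF (fun x₁ => ∑ x₂, μ (x₁, x₂)) - Real.logb 2 k ≤
      cmi (s.joint μ) (fun ω => (ω.2.2.2.1, ω.2.2.2.2.1)) (fun ω => ω.1) (fun ω => ω.2.2.1) := by
  rw [cmi_eq_condEnt_sub_condEnt]
  refine sub_le_sub (ge_of_eq ?_) (condEnt_le_logb_of_card_support_le (s.isPMF_joint hμ) ?_)
  · exact condEnt_eq_entPMF_of_marg_eq_mul (by rw [← Fintype.sum_prod_type, hμ.2])
      s.isPMF_pT.2 (s.marg_joint_fst μ)
  · rintro ⟨⟨u₀, u₁⟩, t⟩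
    have reached {x : X₁} (hx : marg (s.joint μ)
        (fun ω => (ω.1, (ω.2.2.2.1, ω.2.2.2.2.1), ω.2.2.1)) (x, (u₀, u₁), t) ≠ 0) :
        s.pU₀ t u₀ ≠ 0 ∧ s.pU₁ x u₀ t u₁ ≠ 0 := by
      obtain ⟨⟨x₁, x₂, t', u₀', u₁', u₂, y⟩, hω, hne⟩ := exists_of_marg_ne_zero hx
      simp only [Prod.mk.injEq] at hω
      obtain ⟨rfl, ⟨rfl, rfl⟩, rfl⟩ := hω
      simp only [joint, mul_ne_zero_iff] at hne
      tauto
    refine hk _ fun x hx x' hx' _ => ?_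
    rw [mem_coe, mem_filter_univ] at hx hx'
    exact hs.confusable hμ_pos (reached hx).1 (reached hx).2 (reached hx').2

theorem Simulates.entPMF_sub_logb_le_cmi_right [DecidableEq X₂] [DecidableEq T] [DecidableEq U₀]
    [DecidableEq U₂] {q : X₁ × X₂ × Y → ℝ} (hs : s.Simulates μ q)
    (hμ : IsPMF μ) (hμ_pos : ∀ a, 0 < μ a) {k : ℕ}
    (hk : ∀ S : Finset X₂,
      (S : Set X₂).Pairwise (Confusable fun a => q (a.2.1, a.1, a.2.2)) → #S ≤ k) :
    entPMF (fun x₂ => ∑ x₁, μ (x₁, x₂)) - Real.logb 2 k ≤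
      cmi (s.joint μ) (fun ω => (ω.2.2.2.1, ω.2.2.2.2.2.1)) (fun ω => ω.2.1)
        (fun ω => ω.2.2.1) := by
  have hμ_swap : IsPMF (μ ∘ Prod.swap) :=
    ⟨fun a => hμ.1 a.swap, ((Equiv.prodComm X₂ X₁).sum_comp μ).trans hμ.2⟩
  have hleft := hs.swap.entPMF_sub_logb_le_cmi_left hμ_swap (fun a => hμ_pos a.swap) hk
  rw [← cmi_comp_equiv _ exchange, swap_joint_comp_exchange] at hleft
  exact hleft

end SharedRandomnessScheme

section Example

/-- The law of the inputs of the example: four i.i.d. uniform bits. -/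
noncomputable def fourBits : (Bool × Bool) × (Bool × Bool) → ℝ := fun _ => 1 / 16

lemma isPMF_fourBits : IsPMF fourBits := ⟨fun _ => by norm_num [fourBits], by norm_num [fourBits]⟩

lemma sum_fourBits_left (x₂ : Bool × Bool) : ∑ x₁, fourBits (x₁, x₂) = 1 / 4 := by
  norm_num [fourBits]

lemma sum_fourBits_right (x₁ : Bool × Bool) : ∑ x₂, fourBits (x₁, x₂) = 1 / 4 := by
  norm_num [fourBits]

lemma fourBits_pos (a : (Bool × Bool) × (Bool × Bool)) : 0 < fourBits a := by norm_num [fourBits]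

lemma qEx_ne_zero_iff {x₁ x₂ y : Bool × Bool} :
    qEx (x₁, x₂, y) ≠ 0 ↔ y = (x₁.1, x₂.1) ∨ y = (x₁.2, x₂.2) := by
  simp only [qEx, bsel, Fin.sum_univ_two]
  split_ifs <;> simp_all

lemma not_confusable_qEx_compl (x : Bool × Bool) : ¬ Confusable qEx x xᶜ := by
  intro h
  -- As the two bits of `(false, true)` differ, the output reveals `J` and hence a bit of `x`.
  obtain ⟨y, hy⟩ := h (false, true)
  simp only [qEx_ne_zero_iff] at hy
  clear h
  revert x y
  decide

lemma qEx_swap (x₁ x₂ y : Bool × Bool) : qEx (x₂, x₁, y.swap) = qEx (x₁, x₂, y) := by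
  simp only [qEx, Prod.ext_iff, Prod.fst_swap, Prod.snd_swap]
  simp only [and_comm (a := y.1 = _)]

lemma not_confusable_swap_qEx_compl (x : Bool × Bool) :
    ¬ Confusable (fun a => qEx (a.2.1, a.1, a.2.2)) x xᶜ := by
  intro h
  refine not_confusable_qEx_compl x fun x₂ => ?_
  obtain ⟨y, hy⟩ := h x₂
  exact ⟨y.swap, (qEx_swap x₂ x y).trans_ne hy.1, (qEx_swap x₂ xᶜ y).trans_ne hy.2⟩

lemma card_le_two_of_pairwise {r : Bool × Bool → Bool × Bool → Prop} (hr : ∀ x, ¬ r x xᶜ)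
    (S : Finset (Bool × Bool)) (hS : (S : Set (Bool × Bool)).Pairwise r) : #S ≤ 2 := by
  have compl_notMem : ∀ x ∈ S, xᶜ ∉ S := fun x hx hx' => hr x (hS hx hx' ne_compl_self)
  clear hS
  revert S
  decide

/-- The optimal scheme: `T` is trivial, `U₀ = J` is a uniform index, `Uᵢ = XᵢJ` and
`Y = (U₁, U₂)`. -/
noncomputable def revealBit :
    SharedRandomnessScheme (Bool × Bool) (Bool × Bool) (Bool × Bool) Unit (Fin 2) Bool Bool where
  pT _ := 1
  pU₀ _ _ := 1 / 2
  pU₁ x j _ u := if u = bsel x j then 1 else 0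
  pU₂ x j _ u := if u = bsel x j then 1 else 0
  pY u₁ u₂ _ y := if y = (u₁, u₂) then 1 else 0
  isPMF_pT := ⟨fun _ => zero_le_one, by simp⟩
  isPMF_pU₀ _ := ⟨fun _ => by norm_num, by simp⟩
  isPMF_pU₁ _ _ _ := isPMF_ite_eq _
  isPMF_pU₂ _ _ _ := isPMF_ite_eq _
  isPMF_pY _ _ _ := isPMF_ite_eq _

lemma revealBit_simulates : revealBit.Simulates fourBits qEx := by
  intro t x₁ x₂ y
  refine sum_congr rfl fun j _ => ?_
  rw [sum_eq_single (bsel x₁ j) (by simp +contextual [revealBit]) (by simp),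
    sum_eq_single (bsel x₂ j) (by simp +contextual [revealBit]) (by simp)]
  norm_num [revealBit, fourBits]

/-- The variables of `revealBit` as functions of the inputs and the index `J`. -/
def revealBitVars (a : (Bool × Bool) × (Bool × Bool) × Fin 2) :
    (Bool × Bool) × (Bool × Bool) × Unit × Fin 2 × Bool × Bool × (Bool × Bool) :=
  match a with
  | (x₁, x₂, j) => (x₁, x₂, (), j, bsel x₁ j, bsel x₂ j, (bsel x₁ j, bsel x₂ j))

lemma ent_revealBit_of_card_fiber {β : Type*} [Fintype β] [DecidableEq β]
    (f : (Bool × Bool) × (Bool × Bool) × Unit × Fin 2 × Bool × Bool × (Bool × Bool) → β) {k : ℕ}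
    (hf : ∀ a, #{a' | f (revealBitVars a') = f (revealBitVars a)} = 2 ^ k) :
    ent (revealBit.joint fourBits) f = 5 - k := by
  classical
  have card_eq : (Fintype.card ((Bool × Bool) × (Bool × Bool) × Fin 2) : ℝ) = 2 ^ 5 := by norm_num
  have joint_eq : revealBit.joint fourBits = marg
      (fun _ => (Fintype.card ((Bool × Bool) × (Bool × Bool) × Fin 2) : ℝ)⁻¹) revealBitVars := by
    ext ⟨x₁, x₂, t, j, u₁, u₂, y⟩
    simp only [marg, Fintype.sum_prod_type (α₁ := Bool × Bool)]
    rw [sum_eq_single x₁ (by simp +contextual [revealBitVars]) (by simp),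
      sum_eq_single x₂ (by simp +contextual [revealBitVars]) (by simp),
      sum_eq_single j (by simp +contextual [revealBitVars]) (by simp)]
    simp only [SharedRandomnessScheme.joint, revealBit, fourBits, revealBitVars, Prod.mk.injEq]
    grind
  rw [joint_eq, ent_marg, ent_uniform_of_card_fiber (f ∘ revealBitVars) hf, card_eq]
  push_cast
  rw [Real.logb_div (by positivity) (by positivity), Real.logb_pow, Real.logb_pow,
    Real.logb_self_eq_one one_lt_two]
  norm_num

lemma cmi_revealBit_left :
    cmi (revealBit.joint fourBits) (fun ω => (ω.2.2.2.1, ω.2.2.2.2.1)) (fun ω => ω.1)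
      (fun ω => ω.2.2.1) = 1 := by
  rw [cmi, ent_revealBit_of_card_fiber (k := 3) _ (by decide),
    ent_revealBit_of_card_fiber (k := 3) _ (by decide),
    ent_revealBit_of_card_fiber (k := 2) _ (by decide),
    ent_revealBit_of_card_fiber (k := 5) _ (by decide)]
  norm_num

lemma cmi_revealBit_right :
    cmi (revealBit.joint fourBits) (fun ω => (ω.2.2.2.1, ω.2.2.2.2.2.1)) (fun ω => ω.2.1)
      (fun ω => ω.2.2.1) = 1 := by
  rw [cmi, ent_revealBit_of_card_fiber (k := 3) _ (by decide),
    ent_revealBit_of_card_fiber (k := 3) _ (by decide),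
    ent_revealBit_of_card_fiber (k := 2) _ (by decide),
    ent_revealBit_of_card_fiber (k := 5) _ (by decide)]
  norm_num

lemma cmi_revealBit_sum :
    cmi (revealBit.joint fourBits) (fun ω => (ω.2.2.2.1, ω.2.2.2.2.1, ω.2.2.2.2.2.1))
      (fun ω => (ω.1, ω.2.1)) (fun ω => ω.2.2.1) = 2 := by
  rw [cmi, ent_revealBit_of_card_fiber (k := 2) _ (by decide),
    ent_revealBit_of_card_fiber (k := 1) _ (by decide),
    ent_revealBit_of_card_fiber (k := 0) _ (by decide),
    ent_revealBit_of_card_fiber (k := 5) _ (by decide)]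
  norm_num

lemma entPMF_quarter : entPMF (fun _ : Bool × Bool => (1 / 4 : ℝ)) = 2 := by
  have logb_quarter : Real.logb 2 (1 / 4) = -2 := by
    rw [show (1 / 4 : ℝ) = (2 ^ 2)⁻¹ by norm_num, Real.logb_inv, Real.logb_pow,
      Real.logb_self_eq_one one_lt_two]
    norm_num
  norm_num [entPMF, logb_quarter]

section Converse

variable {T U₀ U₁ U₂ : Type*} [Fintype T] [Fintype U₀] [Fintype U₁] [Fintype U₂] [DecidableEq T]
  [DecidableEq U₀] {s : SharedRandomnessScheme (Bool × Bool) (Bool × Bool) (Bool × Bool) T U₀ U₁ U₂}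

lemma one_le_cmi_left [DecidableEq U₁] (hs : s.Simulates fourBits qEx) :
    1 ≤ cmi (s.joint fourBits) (fun ω => (ω.2.2.2.1, ω.2.2.2.2.1)) (fun ω => ω.1)
      (fun ω => ω.2.2.1) := by
  have bound := hs.entPMF_sub_logb_le_cmi_left isPMF_fourBits fourBits_pos
    (card_le_two_of_pairwise not_confusable_qEx_compl)
  simp only [sum_fourBits_right, entPMF_quarter, Nat.cast_ofNat,
    Real.logb_self_eq_one one_lt_two] at bound
  linarith

lemma one_le_cmi_right [DecidableEq U₂] (hs : s.Simulates fourBits qEx) :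
    1 ≤ cmi (s.joint fourBits) (fun ω => (ω.2.2.2.1, ω.2.2.2.2.2.1)) (fun ω => ω.2.1)
      (fun ω => ω.2.2.1) := by
  have bound := hs.entPMF_sub_logb_le_cmi_right isPMF_fourBits fourBits_pos
    (card_le_two_of_pairwise not_confusable_swap_qEx_compl)
  simp only [sum_fourBits_left, entPMF_quarter, Nat.cast_ofNat,
    Real.logb_self_eq_one one_lt_two] at bound
  linarith

end Converse

end Example

/-- **Optimal single-letter communication rate region for the example with shared
randomness between all three pairs.**  The set of nonnegative rate pairs `(R₁, R₂)`
admitting finite auxiliary alphabets `T, U₀, U₁, U₂` and a pmf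
`p(x₁,x₂,t,u₀,u₁,u₂,y) = p(x₁) p(x₂) p(t) p(u₀|t) p(u₁|x₁,u₀,t) p(u₂|x₂,u₀,t) p(y|u₁,u₂,t)`
(with `(X₁,X₂)`-marginal four i.i.d. uniform bits) satisfying
`∑_{u₀,u₁,u₂} p(x₁,x₂,u₀,u₁,u₂,y|t) = q(x₁,x₂,y)` for every `t`, with
`R₁ ≥ I(U₀,U₁;X₁|T)`, `R₂ ≥ I(U₀,U₂;X₂|T)` and `R₁+R₂ ≥ I(U₀,U₁,U₂;X₁,X₂|T)`, is exactly
`{(R₁,R₂) : R₁ ≥ 1, R₂ ≥ 1}`. -/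
theorem example_rate_region_all_pairs_SR :
    {r : ℝ × ℝ | 0 ≤ r.1 ∧ 0 ≤ r.2 ∧
      ∃ (T U0 U1 U2 : Type) (_ : Fintype T) (_ : Fintype U0) (_ : Fintype U1)
        (_ : Fintype U2) (_ : DecidableEq T) (_ : DecidableEq U0) (_ : DecidableEq U1)
        (_ : DecidableEq U2)
        (pT : T → ℝ) (pU0c : T → U0 → ℝ)
        (pU1c : Bool × Bool → U0 → T → U1 → ℝ)
        (pU2c : Bool × Bool → U0 → T → U2 → ℝ)
        (pYc : U1 → U2 → T → Bool × Bool → ℝ)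
        (p : (Bool × Bool) × (Bool × Bool) × T × U0 × U1 × U2 × (Bool × Bool) → ℝ),
        IsPMF pT ∧
        (∀ t, IsPMF (pU0c t)) ∧
        (∀ x1 u0 t, IsPMF (pU1c x1 u0 t)) ∧
        (∀ x2 u0 t, IsPMF (pU2c x2 u0 t)) ∧
        (∀ u1 u2 t, IsPMF (pYc u1 u2 t)) ∧
        (∀ x1 x2 t u0 u1 u2 y,
          p (x1, x2, t, u0, u1, u2, y) =
            (1 / 16 : ℝ) * pT t * pU0c t u0 * pU1c x1 u0 t u1 * pU2c x2 u0 t u2 *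
              pYc u1 u2 t y) ∧
        (∀ t x1 x2 y,
          (∑ u0 : U0, ∑ u1 : U1, ∑ u2 : U2,
            (1 / 16 : ℝ) * pU0c t u0 * pU1c x1 u0 t u1 * pU2c x2 u0 t u2 *
              pYc u1 u2 t y) = qEx (x1, x2, y)) ∧
        cmi p (fun ω => (ω.2.2.2.1, ω.2.2.2.2.1)) (fun ω => ω.1)
          (fun ω => ω.2.2.1) ≤ r.1 ∧
        cmi p (fun ω => (ω.2.2.2.1, ω.2.2.2.2.2.1)) (fun ω => ω.2.1)
          (fun ω => ω.2.2.1) ≤ r.2 ∧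
        cmi p (fun ω => (ω.2.2.2.1, ω.2.2.2.2.1, ω.2.2.2.2.2.1))
          (fun ω => (ω.1, ω.2.1)) (fun ω => ω.2.2.1) ≤ r.1 + r.2}
    = {r : ℝ × ℝ | 1 ≤ r.1 ∧ 1 ≤ r.2} := by
  ext ⟨R₁, R₂⟩
  constructor
  · rintro ⟨-, -, T, U0, U1, U2, _, _, _, _, _, _, _, _, pT, pU0c, pU1c, pU2c, pYc, p,
      hT, hU0, hU1, hU2, hY, hp, hq, hR₁, hR₂, -⟩
    let s : SharedRandomnessScheme (Bool × Bool) (Bool × Bool) (Bool × Bool) T U0 U1 U2 :=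
      ⟨pT, pU0c, pU1c, pU2c, pYc, hT, hU0, hU1, hU2, hY⟩
    have hs : s.Simulates fourBits qEx := hq
    obtain rfl : p = s.joint fourBits := by
      ext ⟨x₁, x₂, t, u₀, u₁, u₂, y⟩
      exact hp x₁ x₂ t u₀ u₁ u₂ y
    exact ⟨(one_le_cmi_left hs).trans hR₁, (one_le_cmi_right hs).trans hR₂⟩
  · rintro ⟨hR₁ : 1 ≤ R₁, hR₂ : 1 ≤ R₂⟩
    refine ⟨zero_le_one.trans hR₁, zero_le_one.trans hR₂, Unit, Fin 2, Bool, Bool,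
      inferInstance, inferInstance, inferInstance, inferInstance, inferInstance, inferInstance,
      inferInstance, inferInstance, revealBit.pT, revealBit.pU₀, revealBit.pU₁, revealBit.pU₂,
      revealBit.pY, revealBit.joint fourBits, revealBit.isPMF_pT, revealBit.isPMF_pU₀,
      revealBit.isPMF_pU₁, revealBit.isPMF_pU₂, revealBit.isPMF_pY, fun _ _ _ _ _ _ _ => rfl,
      revealBit_simulates, cmi_revealBit_left.trans_le hR₁, cmi_revealBit_right.trans_le hR₂,
      cmi_revealBit_sum.trans_le ?_⟩
    linarith
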